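/- arXiv:1303.1879 — 2 statements merged into one kernel-verified Lean document; each statement's English description precedes it below -/
import Mathlib

section
/- Fix a positive integer q. If the piece P has exactly one basic move (|M| = 1), then the number of connected components of (B°)^q \ ⋃A_P^q is q!, so there is exactly 1 unlabelled nonattacking configuration type of q pieces. If P has exactly two basic moves (|M| = 2), then the number of connected components of (B°)^q \ ⋃A_P^q is (q!)², so there are exactly q! unlabelled nonattacking configuration types of q pieces. In particular the rook and the bishop each have q! unlabelled configuration types. -/
open MeasureTheory

/-! A configuration `z` of pairwise nonattacking pieces determines, for each move `m`, the order in
which the linear form `f m` ranks the pieces. A family `s` of permutations, one for each move, thus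
cuts out a cell. On a connected set of nonattacking configurations no two values `f m (z i)`,
`f m (z j)` cross, and over a convex board each cell is convex, so the nonempty cells are exactly
the connected components. If the forms are linearly independent, the values `f m (z i)` can be
prescribed freely up to a translation and a small scaling, so all `(q!) ^ |M|` cells are nonempty.
Relabelling acts on `s` by left multiplication, which is free, so there are `(q!) ^ (|M| - 1)`
orbits. -/

open Function Set

section General

/-- The connected components of a set `Ω`, as subsets of the ambient space. -/
def componentsIn {Y : Type*} [TopologicalSpace Y] (Ω : Set Y) : Set (Set Y) :=
  {C | ∃ z ∈ Ω, C = connectedComponentIn Ω z}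

/-- The unlabelled configuration types of a set `Ω` of configurations labelled by `κ`: the orbits
of connected components of `Ω` under permutations of the labels. The orbit of the component of `z`
is described as the set of the components of all relabellings of `z`. -/
def unlabelledTypes {κ X : Type*} [TopologicalSpace X] (Ω : Set (κ → X)) :
    Set (Set (Set (κ → X))) :=
  {O | ∃ z ∈ Ω, O = {C | ∃ σ : Equiv.Perm κ, C = connectedComponentIn Ω (fun i => z (σ i))}}

theorem exists_perm_strictMono_comp {α : Type*} [LinearOrder α] {q : ℕ} {a : Fin q → α}
    (ha : Injective a) : ∃ s : Equiv.Perm (Fin q), StrictMono (a ∘ s) :=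
  ⟨Tuple.sort a, (Tuple.monotone_sort a).strictMono_of_injective (ha.comp (Equiv.injective _))⟩

theorem perm_eq_of_strictMono_comp {α : Type*} [LinearOrder α] {q : ℕ} {a : Fin q → α}
    {s t : Equiv.Perm (Fin q)} (hs : StrictMono (a ∘ s)) (ht : StrictMono (a ∘ t)) : s = t := by
  have ha : Injective a := hs.injective.of_comp_right s.surjective
  exact DFunLike.coe_injective (ha.comp_left (Tuple.unique_monotone hs.monotone ht.monotone))

theorem lt_of_isPreconnected_of_forall_ne {X α : Type*} [TopologicalSpace X]
    [LinearOrder α] [TopologicalSpace α] [OrderClosedTopology α] {S : Set X}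
    (hS : IsPreconnected S) {g h : X → α} (hg : ContinuousOn g S) (hh : ContinuousOn h S)
    (hne : ∀ x ∈ S, g x ≠ h x) {x y : X} (hx : x ∈ S) (hy : y ∈ S) (hlt : g x < h x) :
    g y < h y := by
  by_contra! hle
  obtain ⟨w, hw, heq⟩ := hS.intermediate_value₂ hx hy hg hh hlt.le hle
  exact hne w hw heq

theorem card_orbits_pi_mul (G ι : Type*) [Group G] [Finite G] [Fintype ι] [Nonempty ι] :
    Nat.card (MulAction.orbitRel.Quotient G (ι → G)) = Nat.card G ^ (Fintype.card ι - 1) := by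
  have hfree (s : ι → G) : MulAction.stabilizer G s = ⊥ := by
    obtain ⟨m⟩ := ‹Nonempty ι›
    refine (Subgroup.eq_bot_iff_forall _).2 fun g hg => ?_
    exact mul_eq_right.1 (congrFun (MulAction.mem_stabilizer_iff.1 hg) m)
  have hcard := Nat.card_congr (MulAction.selfEquivOrbitsQuotientProd hfree)
  rw [Nat.card_prod, Nat.card_fun, Nat.card_eq_fintype_card (α := ι),
    ← pow_sub_one_mul Fintype.card_ne_zero] at hcard
  exact (Nat.eq_of_mul_eq_mul_right Nat.card_pos hcard).symm

theorem surjective_eval_of_linearIndependent {F V ι : Type*} [Field F] [AddCommGroup V]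
    [Module F V] [Finite ι] {f : ι → Module.Dual F V} (hf : LinearIndependent F f) :
    Surjective fun x m => f m x := by
  have hcoe : LinearIndependent F fun m => (f m : V → F) :=
    hf.map' (LinearMap.ltoFun F V F F) (LinearMap.ker_eq_bot.2 DFunLike.coe_injective)
  have hspan : Submodule.span F (LinearMap.range (LinearMap.pi f) : Set (ι → F)) = ⊤ :=
    span_flip_eq_top_iff_linearIndependent.2 hcoe
  rw [Submodule.span_eq] at hspan
  exact LinearMap.range_eq_top.1 hspan

end General

section Cells

variable {X ι α : Type*} [LinearOrder α] {q : ℕ} {K : Set X} {f : ι → X → α}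

/-- The nonattacking configurations of `q` labelled pieces on the board `K`: the pieces `i` and `j`
attack each other along the move `m` when `f m` takes the same value at both. -/
def nonattackingConfigs (q : ℕ) (K : Set X) (f : ι → X → α) : Set (Fin q → X) :=
  {z | (∀ i, z i ∈ K) ∧ ∀ m, Injective fun i => f m (z i)}

/-- The configurations on `K` whose pieces, listed by increasing `f m`, appear in the order
`s m 0, s m 1, …`, for each move `m`. -/
def orderCell (K : Set X) (f : ι → X → α) (s : ι → Equiv.Perm (Fin q)) : Set (Fin q → X) :=
  {z | (∀ i, z i ∈ K) ∧ ∀ m, StrictMono fun i => f m (z (s m i))}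

theorem orderCell_subset_nonattackingConfigs (s : ι → Equiv.Perm (Fin q)) :
    orderCell K f s ⊆ nonattackingConfigs q K f := fun z hz =>
  ⟨hz.1, fun m => Injective.of_comp_right (f := fun i => f m (z i)) (hz.2 m).injective
    (s m).surjective⟩

theorem exists_mem_orderCell {z : Fin q → X} (hz : z ∈ nonattackingConfigs q K f) :
    ∃ s, z ∈ orderCell K f s := by
  choose s hs using fun m => exists_perm_strictMono_comp (hz.2 m)
  exact ⟨s, hz.1, hs⟩

theorem eq_of_mem_orderCell {s t : ι → Equiv.Perm (Fin q)} {z : Fin q → X}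
    (hs : z ∈ orderCell K f s) (ht : z ∈ orderCell K f t) : s = t :=
  funext fun m => perm_eq_of_strictMono_comp (a := fun i => f m (z i)) (hs.2 m) (ht.2 m)

theorem orderCell_injective
    (hne : ∀ s : ι → Equiv.Perm (Fin q), (orderCell K f s).Nonempty) :
    Injective (orderCell K f : (ι → Equiv.Perm (Fin q)) → _) := fun s _ hst =>
  have ⟨_, hz⟩ := hne s
  eq_of_mem_orderCell hz (hst ▸ hz)

theorem relabel_mem_orderCell {s : ι → Equiv.Perm (Fin q)} {z : Fin q → X}
    (hz : z ∈ orderCell K f s) (σ : Equiv.Perm (Fin q)) :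
    (fun i => z (σ i)) ∈ orderCell K f (σ⁻¹ • s) :=
  ⟨fun i => hz.1 (σ i), fun m => by simpa using hz.2 m⟩

variable [TopologicalSpace X] [TopologicalSpace α] [OrderClosedTopology α]

theorem connectedComponentIn_subset_orderCell (hf : ∀ m, Continuous (f m))
    {s : ι → Equiv.Perm (Fin q)} {z : Fin q → X} (hz : z ∈ orderCell K f s) :
    connectedComponentIn (nonattackingConfigs q K f) z ⊆ orderCell K f s := by
  intro w hw
  have hsub := connectedComponentIn_subset (nonattackingConfigs q K f) z
  refine ⟨(hsub hw).1, fun m i j hij => ?_⟩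
  have hcont (k : Fin q) : Continuous fun x : Fin q → X => f m (x (s m k)) :=
    (hf m).comp (continuous_apply _)
  exact lt_of_isPreconnected_of_forall_ne isPreconnected_connectedComponentIn (hcont i).continuousOn
    (hcont j).continuousOn
    (fun x hx => (((hsub hx).2 m).comp (s m).injective).ne hij.ne)
    (mem_connectedComponentIn (orderCell_subset_nonattackingConfigs s hz)) hw (hz.2 m hij)

theorem connectedComponentIn_eq_orderCell (hf : ∀ m, Continuous (f m))
    {s : ι → Equiv.Perm (Fin q)} (hconn : IsPreconnected (orderCell K f s)) {z : Fin q → X}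
    (hz : z ∈ orderCell K f s) :
    connectedComponentIn (nonattackingConfigs q K f) z = orderCell K f s :=
  (connectedComponentIn_subset_orderCell hf hz).antisymm
    (hconn.subset_connectedComponentIn hz (orderCell_subset_nonattackingConfigs s))

theorem componentsIn_nonattackingConfigs (hf : ∀ m, Continuous (f m))
    (hconn : ∀ s : ι → Equiv.Perm (Fin q), IsPreconnected (orderCell K f s))
    (hne : ∀ s : ι → Equiv.Perm (Fin q), (orderCell K f s).Nonempty) :
    componentsIn (nonattackingConfigs q K f) = range (orderCell K f) := by
  ext C
  constructor
  · rintro ⟨z, hz, rfl⟩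
    obtain ⟨s, hs⟩ := exists_mem_orderCell hz
    exact ⟨s, (connectedComponentIn_eq_orderCell hf (hconn s) hs).symm⟩
  · rintro ⟨s, rfl⟩
    obtain ⟨z, hz⟩ := hne s
    exact ⟨z, orderCell_subset_nonattackingConfigs s hz,
      (connectedComponentIn_eq_orderCell hf (hconn s) hz).symm⟩

theorem setOf_connectedComponentIn_relabel (hf : ∀ m, Continuous (f m))
    (hconn : ∀ s : ι → Equiv.Perm (Fin q), IsPreconnected (orderCell K f s))
    {s : ι → Equiv.Perm (Fin q)} {z : Fin q → X} (hz : z ∈ orderCell K f s) :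
    {C | ∃ σ : Equiv.Perm (Fin q),
        C = connectedComponentIn (nonattackingConfigs q K f) (fun i => z (σ i))} =
      orderCell K f '' MulAction.orbit (Equiv.Perm (Fin q)) s := by
  have hcomp (σ : Equiv.Perm (Fin q)) := connectedComponentIn_eq_orderCell hf (hconn (σ⁻¹ • s))
    (relabel_mem_orderCell hz σ)
  simp only [hcomp, MulAction.orbit, ← range_comp]
  rw [← inv_surjective.range_comp]
  ext C
  exact exists_congr fun σ => eq_comm

theorem unlabelledTypes_nonattackingConfigs (hf : ∀ m, Continuous (f m))
    (hconn : ∀ s : ι → Equiv.Perm (Fin q), IsPreconnected (orderCell K f s))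
    (hne : ∀ s : ι → Equiv.Perm (Fin q), (orderCell K f s).Nonempty) :
    unlabelledTypes (nonattackingConfigs q K f) =
      range fun O : MulAction.orbitRel.Quotient (Equiv.Perm (Fin q)) (ι → Equiv.Perm (Fin q)) =>
        orderCell K f '' O.orbit := by
  ext T
  constructor
  · rintro ⟨z, hz, rfl⟩
    obtain ⟨s, hs⟩ := exists_mem_orderCell hz
    exact ⟨⟦s⟧, (setOf_connectedComponentIn_relabel hf hconn hs).symm⟩
  · rintro ⟨O, rfl⟩
    induction O using Quotient.inductionOn with | h s =>
    obtain ⟨z, hz⟩ := hne s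
    exact ⟨z, orderCell_subset_nonattackingConfigs s hz,
      (setOf_connectedComponentIn_relabel hf hconn hz).symm⟩

theorem ncard_componentsIn_nonattackingConfigs [Fintype ι] (hf : ∀ m, Continuous (f m))
    (hconn : ∀ s : ι → Equiv.Perm (Fin q), IsPreconnected (orderCell K f s))
    (hne : ∀ s : ι → Equiv.Perm (Fin q), (orderCell K f s).Nonempty) :
    (componentsIn (nonattackingConfigs q K f)).ncard = q.factorial ^ Fintype.card ι := by
  rw [componentsIn_nonattackingConfigs hf hconn hne,
    ncard_range_of_injective (orderCell_injective hne), Nat.card_fun, Nat.card_perm, Nat.card_fin,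
    Nat.card_eq_fintype_card]

theorem ncard_unlabelledTypes_nonattackingConfigs [Fintype ι] [Nonempty ι]
    (hf : ∀ m, Continuous (f m))
    (hconn : ∀ s : ι → Equiv.Perm (Fin q), IsPreconnected (orderCell K f s))
    (hne : ∀ s : ι → Equiv.Perm (Fin q), (orderCell K f s).Nonempty) :
    (unlabelledTypes (nonattackingConfigs q K f)).ncard = q.factorial ^ (Fintype.card ι - 1) := by
  have hinj := (orderCell_injective hne).image_injective.comp
    (MulAction.orbitRel.Quotient.orbit_injective (G := Equiv.Perm (Fin q)))
  rw [unlabelledTypes_nonattackingConfigs hf hconn hne]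
  exact (ncard_range_of_injective hinj).trans (by
    rw [card_orbits_pi_mul, Nat.card_perm, Nat.card_fin])

end Cells

section LinearForms

variable {E ι : Type*} [AddCommGroup E] [Module ℝ E] {K : Set E} {q : ℕ}

theorem convex_orderCell {f : ι → Module.Dual ℝ E} (hK : Convex ℝ K)
    (s : ι → Equiv.Perm (Fin q)) : Convex ℝ (orderCell K (fun m => f m) s) := by
  intro x hx y hy a b ha hb hab
  refine ⟨fun i => hK (hx.1 i) (hy.1 i) ha hb hab, fun m i j hij => ?_⟩
  have hpos := convex_Ioi (𝕜 := ℝ) (0 : ℝ) (sub_pos.2 (hx.2 m hij)) (sub_pos.2 (hy.2 m hij))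
    ha hb hab
  simp only [smul_eq_mul, mem_Ioi] at hpos
  simp only [Pi.add_apply, Pi.smul_apply, map_add, map_smul, smul_eq_mul]
  linarith

variable [TopologicalSpace E] [ContinuousAdd E] [ContinuousSMul ℝ E]

theorem exists_pos_forall_add_smul_mem {κ : Type*} [Finite κ] {c : E} (hc : c ∈ interior K)
    (w : κ → E) : ∃ ε : ℝ, 0 < ε ∧ ∀ i, c + ε • w i ∈ K := by
  have hmem (i : κ) : ∀ᶠ ε : ℝ in nhds 0, c + ε • w i ∈ K := by
    have hcont : Continuous fun ε : ℝ => c + ε • w i := by fun_prop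
    exact hcont.continuousAt.eventually_mem (by simpa using mem_interior_iff_mem_nhds.1 hc)
  have hall := (Filter.eventually_all.2 hmem).filter_mono (nhdsWithin_le_nhds (s := Ioi 0))
  obtain ⟨ε, hε, hpos⟩ := (hall.and self_mem_nhdsWithin).exists
  exact ⟨ε, hpos, hε⟩

theorem orderCell_nonempty [Finite ι] {f : ι → Module.Dual ℝ E} (hf : LinearIndependent ℝ f)
    (hK : (interior K).Nonempty) (s : ι → Equiv.Perm (Fin q)) :
    (orderCell K (fun m => f m) s).Nonempty := by
  obtain ⟨c, hc⟩ := hK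
  choose w hw using fun i => surjective_eval_of_linearIndependent hf
    fun m => (((s m).symm i : ℕ) : ℝ)
  obtain ⟨ε, hε, hmem⟩ := exists_pos_forall_add_smul_mem hc w
  refine ⟨fun i => c + ε • w i, hmem, fun m i j hij => ?_⟩
  have hrank (k : Fin q) : f m (w (s m k)) = (k : ℕ) := by
    simpa using congrFun (hw (s m k)) m
  simp only [map_add, map_smul, smul_eq_mul, hrank]
  gcongr
  exact hij

theorem stmt_13_general [Fintype ι] [Nonempty ι] {f : ι → StrongDual ℝ E}
    (hf : LinearIndependent ℝ f) (hK : Convex ℝ K) (hKint : (interior K).Nonempty) (q : ℕ) :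
    (componentsIn (nonattackingConfigs q K fun m => f m)).ncard =
        q.factorial ^ Fintype.card ι ∧
      (unlabelledTypes (nonattackingConfigs q K fun m => f m)).ncard =
        q.factorial ^ (Fintype.card ι - 1) := by
  have hdual : LinearIndependent ℝ fun m => (f m : Module.Dual ℝ E) :=
    hf.map' (ContinuousLinearMap.coeLM ℝ)
      (LinearMap.ker_eq_bot.2 ContinuousLinearMap.coe_injective)
  have hcont (m : ι) : Continuous (f m) := (f m).continuous
  have hconn (s : ι → Equiv.Perm (Fin q)) : IsPreconnected (orderCell K (fun m => f m) s) :=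
    (convex_orderCell (f := fun m => (f m : Module.Dual ℝ E)) hK s).isPreconnected
  have hne (s : ι → Equiv.Perm (Fin q)) : (orderCell K (fun m => f m) s).Nonempty :=
    orderCell_nonempty hdual hKint s
  exact ⟨ncard_componentsIn_nonattackingConfigs hcont hconn hne,
    ncard_unlabelledTypes_nonattackingConfigs hcont hconn hne⟩

end LinearForms

section Moves

/-- The linear form `z ↦ z · m^⊥` of the move `m = (c, d)`, where `m^⊥ = (d, -c)`. -/
def moveForm (m : ℤ × ℤ) : StrongDual ℝ (ℝ × ℝ) :=
  (m.2 : ℝ) • .fst ℝ ℝ ℝ - (m.1 : ℝ) • .snd ℝ ℝ ℝ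

theorem moveForm_apply (m : ℤ × ℤ) (z : ℝ × ℝ) : moveForm m z = z.1 * m.2 - z.2 * m.1 := by
  simp [moveForm, mul_comm]

theorem moveForm_ne_zero {m : ℤ × ℤ} (hm : m ≠ 0) : moveForm m ≠ 0 := by
  intro h
  have hfst := DFunLike.congr_fun h (1, 0)
  have hsnd := DFunLike.congr_fun h (0, 1)
  simp only [moveForm_apply] at hfst hsnd
  exact hm (Prod.ext (by simpa using hsnd) (by simpa using hfst))

theorem exists_moveForm_ne_zero_of_card_le_two {M : Finset (ℤ × ℤ)} (hM0 : ∀ m ∈ M, m ≠ 0)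
    (hMpar : ∀ m ∈ M, ∀ m' ∈ M, m ≠ m' → m.1 * m'.2 - m.2 * m'.1 ≠ 0) (hM : M.card ≤ 2)
    {m : ℤ × ℤ} (hm : m ∈ M) :
    ∃ v, moveForm m v ≠ 0 ∧ ∀ k ∈ M, k ≠ m → moveForm k v = 0 := by
  by_cases hother : ∃ n ∈ M, n ≠ m
  · obtain ⟨n, hn, hnm⟩ := hother
    have honly : ∀ k ∈ M, k ≠ m → k = n := fun k hk hkm => by
      by_contra hkn
      exact hM.not_gt (Finset.two_lt_card.2 ⟨k, hk, n, hn, m, hm, hkn, hkm, hnm⟩)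
    refine ⟨(n.1, n.2), ?_, fun k hk hkm => ?_⟩
    · rw [moveForm_apply]
      dsimp only
      exact_mod_cast hMpar n hn m hm hnm
    · rw [honly k hk hkm, moveForm_apply, mul_comm, sub_self]
  · push Not at hother
    obtain ⟨v, hv⟩ := DFunLike.ne_iff.1 (moveForm_ne_zero (hM0 m hm))
    exact ⟨v, hv, fun k hk hkm => absurd (hother k hk) hkm⟩

theorem linearIndependent_moveForm {M : Finset (ℤ × ℤ)} (hM0 : ∀ m ∈ M, m ≠ 0)
    (hMpar : ∀ m ∈ M, ∀ m' ∈ M, m ≠ m' → m.1 * m'.2 - m.2 * m'.1 ≠ 0) (hM : M.card ≤ 2) :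
    LinearIndependent ℝ fun m : M => moveForm m := by
  refine Fintype.linearIndependent_iff.2 fun g hg m => ?_
  obtain ⟨v, hv, hzero⟩ := exists_moveForm_ne_zero_of_card_le_two hM0 hMpar hM m.2
  have hsum : ∑ k : M, g k * moveForm k v = 0 := by simpa using DFunLike.congr_fun hg v
  rw [Fintype.sum_eq_single m fun k hkm => by
    rw [hzero k k.2 (Subtype.coe_injective.ne hkm), mul_zero]] at hsum
  exact (mul_eq_zero.1 hsum).resolve_right hv

theorem setOf_forall_ne_eq_nonattackingConfigs (M : Finset (ℤ × ℤ)) (K : Set (ℝ × ℝ)) (q : ℕ) :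
    {z : Fin q → ℝ × ℝ | (∀ i : Fin q, z i ∈ K) ∧ ∀ i j : Fin q, i ≠ j → ∀ m ∈ M,
        ((z j).1 - (z i).1) * (m.2 : ℝ) - ((z j).2 - (z i).2) * (m.1 : ℝ) ≠ 0} =
      nonattackingConfigs q K fun m : M => moveForm m := by
  have hform (m : ℤ × ℤ) (x y : ℝ × ℝ) :
      (y.1 - x.1) * (m.2 : ℝ) - (y.2 - x.2) * (m.1 : ℝ) = 0 ↔ moveForm m x = moveForm m y := by
    rw [eq_comm (a := moveForm m x), ← sub_eq_zero (b := moveForm m x), ← map_sub,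
      moveForm_apply, Prod.fst_sub, Prod.snd_sub]
  ext z
  refine and_congr_right fun _ => ?_
  simp only [ne_eq, hform, Subtype.forall, Injective]
  exact ⟨fun h m hm i j hij => by_contra fun hne => h i j hne m hm hij,
    fun h i j hne m hm hij => hne (h m hm hij)⟩

end Moves

/-- a piece with exactly one basic move has `q!` components of
`(B°)^q \ ⋃A_P^q` and `1` unlabelled configuration type; a piece with exactly two basic
moves has `(q!)²` components and `q!` unlabelled types. -/
theorem stmt_13
    (M : Finset (ℤ × ℤ)) (hMne : M.Nonempty)
    (hMmove : ∀ m ∈ M, m ≠ 0 ∧ Int.gcd m.1 m.2 = 1)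
    (hMpar : ∀ m ∈ M, ∀ m' ∈ M, m ≠ m' → m.1 * m'.2 - m.2 * m'.1 ≠ 0)
    (V : Finset (ℝ × ℝ)) (hV : ∀ v ∈ V, ∃ a b : ℚ, v = ((a : ℝ), (b : ℝ)))
    (B : Set (ℝ × ℝ)) (hB : B = convexHull ℝ (V : Set (ℝ × ℝ)))
    (hBint : (interior B).Nonempty)
    (q : ℕ) (hq : 0 < q)
    (Ω : Set (Fin q → ℝ × ℝ))
    (hΩ : Ω = {z : Fin q → ℝ × ℝ | (∀ i : Fin q, z i ∈ interior B) ∧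
      ∀ i j : Fin q, i ≠ j → ∀ m ∈ M,
        ((z j).1 - (z i).1) * (m.2 : ℝ) - ((z j).2 - (z i).2) * (m.1 : ℝ) ≠ 0}) :
    (M.card = 1 →
      Set.ncard {C : Set (Fin q → ℝ × ℝ) | ∃ z ∈ Ω, C = connectedComponentIn Ω z}
        = Nat.factorial q ∧
      Set.ncard {O : Set (Set (Fin q → ℝ × ℝ)) | ∃ z ∈ Ω,
          O = {C : Set (Fin q → ℝ × ℝ) | ∃ σ : Equiv.Perm (Fin q),
            C = connectedComponentIn Ω (fun i => z (σ i))}}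
        = 1) ∧
    (M.card = 2 →
      Set.ncard {C : Set (Fin q → ℝ × ℝ) | ∃ z ∈ Ω, C = connectedComponentIn Ω z}
        = Nat.factorial q * Nat.factorial q ∧
      Set.ncard {O : Set (Set (Fin q → ℝ × ℝ)) | ∃ z ∈ Ω,
          O = {C : Set (Fin q → ℝ × ℝ) | ∃ σ : Equiv.Perm (Fin q),
            C = connectedComponentIn Ω (fun i => z (σ i))}}
        = Nat.factorial q) := by
  have : Nonempty M := hMne.to_subtype
  have count (hM : M.card ≤ 2) := stmt_13_general
    (linearIndependent_moveForm (fun m hm => (hMmove m hm).1) hMpar hM)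
    (hB ▸ (convex_convexHull ℝ (V : Set (ℝ × ℝ))).interior) (by rwa [interior_interior]) q
  rw [setOf_forall_ne_eq_nonattackingConfigs] at hΩ
  subst hΩ
  refine ⟨fun hM => ?_, fun hM => ?_⟩
  · simpa [hM, componentsIn, unlabelledTypes] using count (by lia)
  · simpa [hM, sq, componentsIn, unlabelledTypes] using count (by lia)
end

section
/- For every integer n ≥ 0, the number of 2-element subsets {(x_1,y_1), (x_2,y_2)} of {1, …, n}² such that, writing (a,b) = (x_2 − x_1, y_2 − y_1), none of b = 2a, b = −2a, a = 2b, a = −2b holds, equals n⁴/2 − 5n³/6 + 3n²/2 − 11n/12 + (−1)ⁿ·n/4. -/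
/-!
Count the attacking pairs and subtract them from all pairs. Since no two moves are parallel, an
attacking pair lies on the line of exactly one move `v`, and it is `{p, p + k • v}` for a unique
point `p` and a unique `k ≥ 1`. On the square of size `n` there are `(n - k|v₁|) (n - k|v₂|)` such
points `p`, so each of the four nightrider moves contributes `∑ k ≤ n / 2, (n - k) (n - 2k)`; the
upper limit `n / 2` is the source of the term `(-1) ^ n`.
-/

section Riders

variable {G : Type*} [AddCommGroup G]

open scoped Classical in
/-- The placements of two riders on the board `A` that attack each other along the move `v`: the
two positions differ by an integer multiple of `v`. -/
noncomputable def alignedPairs (v : G) (A : Finset G) : Finset (Finset G) :=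
  {S ∈ A.powersetCard 2 | (S : Set G).Pairwise fun p q ↦ q - p ∈ AddSubgroup.zmultiples v}

open scoped Classical in
/-- The nonattacking placements on the board `A` of two riders with basic moves `M`: the two
positions differ by no integer multiple of a basic move. -/
noncomputable def nonattackingPairs (M A : Finset G) : Finset (Finset G) :=
  {S ∈ A.powersetCard 2 |
    (S : Set G).Pairwise fun p q ↦ ∀ v ∈ M, q - p ∉ AddSubgroup.zmultiples v}

lemma pairwise_pair_sub_mem_iff {H : AddSubgroup G} {p q : G} (hpq : p ≠ q) :
    ({p, q} : Set G).Pairwise (fun x y ↦ y - x ∈ H) ↔ q - p ∈ H := by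
  rw [Set.pairwise_pair, sub_mem_comm_iff (a := p) (b := q)]
  tauto

lemma pairwise_pair_forall_sub_notMem_iff {M : Finset G} {p q : G} (hpq : p ≠ q) :
    ({p, q} : Set G).Pairwise (fun x y ↦ ∀ v ∈ M, y - x ∉ AddSubgroup.zmultiples v) ↔
      ∀ v ∈ M, q - p ∉ AddSubgroup.zmultiples v := by
  rw [Set.pairwise_pair]
  simp only [sub_mem_comm_iff (a := p) (b := q)]
  tauto

lemma disjoint_alignedPairs {v w : G}
    (hvw : Disjoint (AddSubgroup.zmultiples v) (AddSubgroup.zmultiples w)) (A : Finset G) :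
    Disjoint (alignedPairs v A) (alignedPairs w A) := by
  classical
  rw [Finset.disjoint_left]
  intro S hSv hSw
  simp only [alignedPairs, Finset.mem_filter, Finset.mem_powersetCard] at hSv hSw
  obtain ⟨p, q, hpq, rfl⟩ := Finset.card_eq_two.1 hSv.1.2
  rw [Finset.coe_pair, pairwise_pair_sub_mem_iff hpq] at hSv hSw
  exact hpq (sub_eq_zero.1 (AddSubgroup.disjoint_def.1 hvw hSv.2 hSw.2)).symm

theorem card_nonattackingPairs_add_sum_card_alignedPairs {M : Finset G}
    (hM : (M : Set G).PairwiseDisjoint AddSubgroup.zmultiples) (A : Finset G) :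
    (nonattackingPairs M A).card + ∑ v ∈ M, (alignedPairs v A).card = A.card.choose 2 := by
  classical
  have hattacking : A.powersetCard 2 \ nonattackingPairs M A = M.biUnion (alignedPairs · A) := by
    ext S
    simp only [nonattackingPairs, alignedPairs, Finset.mem_sdiff, Finset.mem_biUnion,
      Finset.mem_filter, not_and, and_left_comm (b := S ∈ _), exists_and_left]
    refine and_congr_right fun hS ↦ ?_
    obtain ⟨p, q, hpq, rfl⟩ := Finset.card_eq_two.1 (Finset.mem_powersetCard.1 hS).2
    simp [hS, pairwise_pair_sub_mem_iff hpq, pairwise_pair_forall_sub_notMem_iff hpq]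
  have hsubset : nonattackingPairs M A ⊆ A.powersetCard 2 := Finset.filter_subset _ _
  rw [← Finset.card_biUnion fun v hv w hw hvw ↦ disjoint_alignedPairs (hM hv hw hvw) A,
    ← hattacking, add_comm, Finset.card_sdiff_add_card_eq_card hsubset, Finset.card_powersetCard]

variable [IsAddTorsionFree G]

lemma eq_of_pair_add_nsmul_eq [DecidableEq G] {v p q : G} {k l : ℕ} (hv : v ≠ 0) (hk : 0 < k)
    (h : ({p, p + k • v} : Finset G) = {q, q + l • v}) : k = l ∧ p = q := by
  rw [← Finset.coe_inj, Finset.coe_pair, Finset.coe_pair, Set.pair_eq_pair_iff] at h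
  rcases h with ⟨rfl, h⟩ | ⟨hp, hq⟩
  · exact ⟨injective_nsmul_iff_not_isOfFinAddOrder.2
      (not_isOfFinAddOrder_of_isAddTorsionFree hv) (add_left_cancel h), rfl⟩
  · have hsum : (l + k) • v = 0 := by
      rwa [hp, add_assoc, ← add_nsmul, add_eq_left] at hq
    have := (nsmul_eq_zero_iff_left hv).1 hsum
    omega

lemma mem_alignedPairs_iff [DecidableEq G] {v : G} (hv : v ≠ 0) {A S : Finset G} :
    S ∈ alignedPairs v A ↔ ∃ k : ℕ, 0 < k ∧ ∃ p ∈ A, p + k • v ∈ A ∧ {p, p + k • v} = S := by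
  simp only [alignedPairs, Finset.mem_filter, Finset.mem_powersetCard]
  constructor
  · rintro ⟨⟨hSA, hcard⟩, hS⟩
    obtain ⟨p, q, hpq, rfl⟩ := Finset.card_eq_two.1 hcard
    rw [Finset.coe_pair, pairwise_pair_sub_mem_iff hpq] at hS
    obtain ⟨hp, hq⟩ : p ∈ A ∧ q ∈ A := by simpa [Finset.insert_subset_iff] using hSA
    obtain ⟨z, hz⟩ := AddSubgroup.mem_zmultiples_iff.1 hS
    obtain ⟨k, rfl | rfl⟩ := z.eq_nat_or_neg
    · obtain rfl : q = p + k • v := by rw [← natCast_zsmul, hz, add_sub_cancel]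
      exact ⟨k, Nat.pos_of_ne_zero (by rintro rfl; simp at hpq), p, hp, hq, rfl⟩
    · obtain rfl : p = q + k • v := by
        rw [← natCast_zsmul, ← neg_neg ((k : ℤ) • v), ← neg_zsmul, hz, neg_sub, add_sub_cancel]
      exact ⟨k, Nat.pos_of_ne_zero (by rintro rfl; simp at hpq), q, hq, hp, Finset.pair_comm _ _⟩
  · rintro ⟨k, hk, p, hp, hq, rfl⟩
    have hpq : p ≠ p + k • v := by simp [hv, hk.ne']
    rw [Finset.coe_pair, pairwise_pair_sub_mem_iff hpq, add_sub_cancel_left]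
    exact ⟨⟨by simp [Finset.insert_subset_iff, hp, hq], Finset.card_pair hpq⟩,
      AddSubgroup.nsmul_mem_zmultiples v k⟩

theorem card_alignedPairs [DecidableEq G] {v : G} (hv : v ≠ 0) {A : Finset G} {N : ℕ}
    (hN : ∀ k > N, {p ∈ A | p + k • v ∈ A} = ∅) :
    (alignedPairs v A).card = ∑ k ∈ Finset.Icc 1 N, {p ∈ A | p + k • v ∈ A}.card := by
  rw [← Finset.card_sigma]
  symm
  refine Finset.card_bij (fun x _ ↦ {x.2, x.2 + x.1 • v}) ?_ ?_ ?_
  · rintro ⟨k, p⟩ h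
    simp only [Finset.mem_sigma, Finset.mem_Icc, Finset.mem_filter] at h
    exact (mem_alignedPairs_iff hv).2 ⟨k, h.1.1, p, h.2.1, h.2.2, rfl⟩
  · rintro ⟨k, p⟩ hkp ⟨l, q⟩ - heq
    obtain ⟨rfl, rfl⟩ := eq_of_pair_add_nsmul_eq hv
      (Finset.mem_Icc.1 (Finset.mem_sigma.1 hkp).1).1 heq
    rfl
  · intro S hS
    obtain ⟨k, hk, p, hp, hq, rfl⟩ := (mem_alignedPairs_iff hv).1 hS
    have hpk : p ∈ {p ∈ A | p + k • v ∈ A} := Finset.mem_filter.2 ⟨hp, hq⟩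
    have hkN : k ≤ N := not_lt.1 fun h ↦ by simp [hN k h] at hpk
    exact ⟨⟨k, p⟩, Finset.mem_sigma.2 ⟨Finset.mem_Icc.2 ⟨hk, hkN⟩, hpk⟩, rfl⟩

end Riders

section SquareBoard

/-- The square board of size `n`: the lattice points of `{1, …, n}²`. -/
noncomputable def squareBoard (n : ℕ) : Finset (ℤ × ℤ) :=
  Finset.Icc 1 (n : ℤ) ×ˢ Finset.Icc 1 (n : ℤ)

lemma mem_squareBoard {n : ℕ} {z : ℤ × ℤ} :
    z ∈ squareBoard n ↔ 1 ≤ z.1 ∧ z.1 ≤ (n : ℤ) ∧ 1 ≤ z.2 ∧ z.2 ≤ (n : ℤ) := by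
  simp only [squareBoard, Finset.mem_product, Finset.mem_Icc, and_assoc]

lemma card_squareBoard (n : ℕ) : (squareBoard n).card = n ^ 2 := by
  simp [squareBoard, sq]

lemma card_filter_Icc_add_mem_Icc (n : ℕ) (d : ℤ) :
    {x ∈ Finset.Icc 1 (n : ℤ) | x + d ∈ Finset.Icc 1 (n : ℤ)}.card = n - d.natAbs := by
  have hfilter : {x ∈ Finset.Icc 1 (n : ℤ) | x + d ∈ Finset.Icc 1 (n : ℤ)}
      = Finset.Icc (max 1 (1 - d)) (min n (n - d)) := by
    ext x
    simp only [Finset.mem_filter, Finset.mem_Icc]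
    omega
  rw [hfilter, Int.card_Icc]
  omega

lemma card_filter_squareBoard_add_mem_squareBoard (n : ℕ) (d : ℤ × ℤ) :
    {p ∈ squareBoard n | p + d ∈ squareBoard n}.card
      = (n - d.1.natAbs) * (n - d.2.natAbs) := by
  rw [← card_filter_Icc_add_mem_Icc n d.1, ← card_filter_Icc_add_mem_Icc n d.2,
    ← Finset.card_product, ← Finset.filter_product]
  simp only [squareBoard, Finset.mem_product, Prod.fst_add, Prod.snd_add]

theorem card_alignedPairs_squareBoard (n : ℕ) {v : ℤ × ℤ} (hv : v ≠ 0) :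
    (alignedPairs v (squareBoard n)).card
      = ∑ k ∈ Finset.Icc 1 n, (n - k * v.1.natAbs) * (n - k * v.2.natAbs) := by
  have hcard (k : ℕ) : {p ∈ squareBoard n | p + k • v ∈ squareBoard n}.card
      = (n - k * v.1.natAbs) * (n - k * v.2.natAbs) := by
    simp [card_filter_squareBoard_add_mem_squareBoard, Int.natAbs_mul]
  have hempty (k : ℕ) (hk : k > n) : {p ∈ squareBoard n | p + k • v ∈ squareBoard n} = ∅ := by
    have hv' : 0 < v.1.natAbs ∨ 0 < v.2.natAbs := by
      simpa [Int.natAbs_pos, Prod.ext_iff, imp_iff_not_or] using hv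
    rw [← Finset.card_eq_zero, hcard, mul_eq_zero, Nat.sub_eq_zero_iff_le, Nat.sub_eq_zero_iff_le]
    exact hv'.imp (fun h ↦ hk.le.trans (Nat.le_mul_of_pos_right k h))
      fun h ↦ hk.le.trans (Nat.le_mul_of_pos_right k h)
  simp only [card_alignedPairs hv hempty, hcard]

end SquareBoard

section LatticeDirections

lemma mem_zmultiples_iff_of_isCoprime {v d : ℤ × ℤ} (hv : IsCoprime v.1 v.2) :
    d ∈ AddSubgroup.zmultiples v ↔ v.1 * d.2 = v.2 * d.1 := by
  rw [AddSubgroup.mem_zmultiples_iff]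
  constructor
  · rintro ⟨k, rfl⟩
    simp only [Prod.smul_fst, Prod.smul_snd, smul_eq_mul]
    ring
  · intro h
    obtain ⟨a, b, hab⟩ := hv
    refine ⟨a * d.1 + b * d.2, Prod.ext ?_ ?_⟩ <;>
      simp only [Prod.smul_fst, Prod.smul_snd, smul_eq_mul]
    · linear_combination d.1 * hab + b * h
    · linear_combination d.2 * hab - a * h

lemma disjoint_zmultiples_of_det_ne_zero {v w : ℤ × ℤ} (h : v.1 * w.2 - v.2 * w.1 ≠ 0) :
    Disjoint (AddSubgroup.zmultiples v) (AddSubgroup.zmultiples w) := by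
  rw [AddSubgroup.disjoint_def]
  rintro _ ⟨k, rfl⟩ hk
  obtain ⟨l, hl⟩ := AddSubgroup.mem_zmultiples_iff.1 hk
  simp only [Prod.ext_iff, Prod.smul_fst, Prod.smul_snd, smul_eq_mul] at hl
  have hkdet : k * (v.1 * w.2 - v.2 * w.1) = 0 := by
    linear_combination w.1 * hl.2 - w.2 * hl.1
  simp [(mul_eq_zero.1 hkdet).resolve_right h]

end LatticeDirections

section Nightrider

/-- The basic moves of the nightrider, one for each of its four lines of attack. -/
def nightriderMoves : Finset (ℤ × ℤ) := {(1, 2), (2, 1), (1, -2), (2, -1)}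

lemma pairwiseDisjoint_zmultiples_nightriderMoves :
    (nightriderMoves : Set (ℤ × ℤ)).PairwiseDisjoint AddSubgroup.zmultiples := by
  have hdet : ∀ v ∈ nightriderMoves, ∀ w ∈ nightriderMoves, v ≠ w →
      v.1 * w.2 - v.2 * w.1 ≠ 0 := by decide
  exact fun v hv w hw hvw ↦ disjoint_zmultiples_of_det_ne_zero (hdet v hv w hw hvw)

lemma forall_mem_nightriderMoves_notMem_zmultiples_iff (d : ℤ × ℤ) :
    (∀ v ∈ nightriderMoves, d ∉ AddSubgroup.zmultiples v) ↔
      d.2 ≠ 2 * d.1 ∧ d.2 ≠ -(2 * d.1) ∧ d.1 ≠ 2 * d.2 ∧ d.1 ≠ -(2 * d.2) := by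
  have hcoprime : ∀ v ∈ nightriderMoves, IsCoprime v.1 v.2 := by
    simp only [Int.isCoprime_iff_gcd_eq_one]
    decide
  rw [forall₂_congr fun v hv ↦ (mem_zmultiples_iff_of_isCoprime (hcoprime v hv)).not]
  simp only [nightriderMoves, Finset.forall_mem_insert, Finset.mem_singleton, forall_eq]
  omega

lemma mem_nonattackingPairs_nightriderMoves_squareBoard_iff {n : ℕ} {S : Finset (ℤ × ℤ)} :
    S ∈ nonattackingPairs nightriderMoves (squareBoard n) ↔
      S.card = 2 ∧
      (∀ z ∈ S, 1 ≤ z.1 ∧ z.1 ≤ (n : ℤ) ∧ 1 ≤ z.2 ∧ z.2 ≤ (n : ℤ)) ∧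
      (∀ z ∈ S, ∀ w ∈ S, z ≠ w →
        w.2 - z.2 ≠ 2 * (w.1 - z.1) ∧ w.2 - z.2 ≠ -(2 * (w.1 - z.1)) ∧
        w.1 - z.1 ≠ 2 * (w.2 - z.2) ∧ w.1 - z.1 ≠ -(2 * (w.2 - z.2))) := by
  simp only [nonattackingPairs, Finset.mem_filter, Finset.mem_powersetCard,
    Finset.subset_iff, mem_squareBoard, Set.Pairwise,
    forall_mem_nightriderMoves_notMem_zmultiples_iff, Prod.fst_sub, Prod.snd_sub]
  tauto

theorem card_nonattackingPairs_nightrider_add (n : ℕ) :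
    (nonattackingPairs nightriderMoves (squareBoard n)).card
        + 4 * ∑ k ∈ Finset.Icc 1 n, (n - k) * (n - 2 * k) = (n ^ 2).choose 2 := by
  have haligned : ∀ v ∈ nightriderMoves, (alignedPairs v (squareBoard n)).card
      = ∑ k ∈ Finset.Icc 1 n, (n - k) * (n - 2 * k) := by
    intro v hv
    have hv0 : v ≠ 0 := ne_of_mem_of_not_mem hv (by decide)
    have habs : ∀ v ∈ nightriderMoves, v.1.natAbs = 1 ∧ v.2.natAbs = 2 ∨
        v.1.natAbs = 2 ∧ v.2.natAbs = 1 := by decide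
    rw [card_alignedPairs_squareBoard n hv0]
    refine Finset.sum_congr rfl fun k _ ↦ ?_
    rcases habs v hv with ⟨h₁, h₂⟩ | ⟨h₁, h₂⟩ <;> rw [h₁, h₂] <;> ring_nf
  have hcard : nightriderMoves.card = 4 := rfl
  rw [← card_squareBoard,
    ← card_nonattackingPairs_add_sum_card_alignedPairs pairwiseDisjoint_zmultiples_nightriderMoves,
    Finset.sum_congr rfl haligned, Finset.sum_const, hcard, smul_eq_mul]

end Nightrider

section ClosedForm

lemma sum_Icc_one_sub_mul_sub_two_mul {K : Type*} [Field K] [CharZero K] (a : K) (m : ℕ) :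
    ∑ k ∈ Finset.Icc 1 m, (a - k) * (a - 2 * k)
      = m * a ^ 2 - 3 * a * (m * (m + 1)) / 2 + m * (m + 1) * (2 * m + 1) / 3 := by
  induction m with
  | zero => simp
  | succ m ih =>
    rw [Finset.sum_Icc_succ_top (by omega), ih]
    push_cast
    ring

-- Truncated subtraction makes the terms with `k > n / 2` vanish.
lemma cast_sum_Icc_tsub_mul_tsub_two_mul {R : Type*} [Ring R] (n : ℕ) :
    ((∑ k ∈ Finset.Icc 1 n, (n - k) * (n - 2 * k) : ℕ) : R)
      = ∑ k ∈ Finset.Icc 1 (n / 2), ((n : R) - k) * (n - 2 * k) := by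
  have htail : ∑ k ∈ Finset.Icc 1 (n / 2), (n - k) * (n - 2 * k)
      = ∑ k ∈ Finset.Icc 1 n, (n - k) * (n - 2 * k) := by
    refine Finset.sum_subset (Finset.Icc_subset_Icc_right (n.div_le_self 2)) fun k hk hk' ↦ ?_
    rw [Finset.mem_Icc] at hk hk'
    rw [Nat.sub_eq_zero_of_le (by omega : n ≤ 2 * k), mul_zero]
  rw [← htail, Nat.cast_sum]
  refine Finset.sum_congr rfl fun k hk ↦ ?_
  rw [Finset.mem_Icc] at hk
  rw [Nat.cast_mul, Nat.cast_sub (by omega : k ≤ n), Nat.cast_sub (by omega : 2 * k ≤ n),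
    Nat.cast_mul, Nat.cast_ofNat]

lemma four_mul_cast_sum_Icc_tsub_mul_tsub_two_mul {K : Type*} [Field K] [CharZero K] (n : ℕ) :
    4 * ((∑ k ∈ Finset.Icc 1 n, (n - k) * (n - 2 * k) : ℕ) : K)
      = 5 * n ^ 3 / 6 - 2 * n ^ 2 + 11 * n / 12 - (-1) ^ n * n / 4 := by
  rw [cast_sum_Icc_tsub_mul_tsub_two_mul, sum_Icc_one_sub_mul_sub_two_mul]
  obtain ⟨m, rfl | rfl⟩ := n.even_or_odd'
  · rw [Nat.mul_div_cancel_left m two_pos, (even_two_mul m).neg_one_pow]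
    push_cast
    ring
  · rw [show (2 * m + 1) / 2 = m by omega, (odd_two_mul_add_one m).neg_one_pow]
    push_cast
    ring

end ClosedForm

/-- the number of nonattacking placements of two nightriders on the `n × n`
board is `n⁴/2 − 5n³/6 + 3n²/2 − 11n/12 + (−1)ⁿ·n/4`. -/
theorem stmt_15 (n : ℕ) :
    (Set.ncard {S : Finset (ℤ × ℤ) |
      S.card = 2 ∧
      (∀ z ∈ S, 1 ≤ z.1 ∧ z.1 ≤ (n : ℤ) ∧ 1 ≤ z.2 ∧ z.2 ≤ (n : ℤ)) ∧
      (∀ z ∈ S, ∀ w ∈ S, z ≠ w →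
        w.2 - z.2 ≠ 2 * (w.1 - z.1) ∧ w.2 - z.2 ≠ -(2 * (w.1 - z.1)) ∧
        w.1 - z.1 ≠ 2 * (w.2 - z.2) ∧ w.1 - z.1 ≠ -(2 * (w.2 - z.2)))} : ℚ)
      = (n : ℚ) ^ 4 / 2 - 5 * (n : ℚ) ^ 3 / 6 + 3 * (n : ℚ) ^ 2 / 2 - 11 * (n : ℚ) / 12
        + (-1 : ℚ) ^ n * (n : ℚ) / 4 := by
  have hcount := congrArg (Nat.cast : ℕ → ℚ) (card_nonattackingPairs_nightrider_add n)
  rw [Nat.cast_add, Nat.cast_mul, Nat.cast_choose_two, Nat.cast_ofNat,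
    four_mul_cast_sum_Icc_tsub_mul_tsub_two_mul, Nat.cast_pow] at hcount
  simp_rw [← mem_nonattackingPairs_nightriderMoves_squareBoard_iff]
  rw [Finset.setOfPred_mem, Set.ncard_coe_finset]
  linear_combination hcount
end
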